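/- There exist no smooth functions α₁, α₂, λ : I → ℝ on a nonempty open interval I with α₁'(s)² + α₂'(s)² = 1 and sin(α₁(s)) cos(α₁(s)) ≠ 0 for all s ∈ I that satisfy equations (E1), (E2) and (E3) on I; that is, no hypersurface of S³ × ℝ of the given form admits an almost Ricci soliton with potential vector field T. -/

import Mathlib

/-!
Write `u = α₁'`, `v = α₂'`, `S = sin α₁`, `C = cos α₁`. Since `tan + cot = 1 / (S C)`, subtracting
(E3) from (E2) gives `u' = u v`, so `λ = -2 v²`, and (E1) becomes the relation
`v' S C + u v (S² - C²) + 2 S C = 0`. Differentiating `u² + v² = 1` gives `v (u² + v') = 0`.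
If `v` vanished identically on `I`, the relation would read `2 S C = 0`; hence `v ≠ 0` near some
point `p`, and there `v' = -u²`, so that `u v (S² - C²) + (1 + v²) S C = 0`. Differentiating this
last identity once more at `p` and multiplying by `v` yields
`((1 + u²) (1 + v²) + 2 u² v²) S C = 0`, which is absurd.
-/


/-- there exist no smooth functions `α₁, α₂, λ` on a nonempty open
interval `I` with `(α₁')² + (α₂')² = 1` and `sin(α₁)cos(α₁) ≠ 0` on `I` satisfying
(E1), (E2) and (E3); i.e. no hypersurface of `S³ × ℝ` of the given form admits an
almost Ricci soliton with potential vector field `T`. -/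
theorem stmt13 :
    ¬ ∃ (I : Set ℝ) (α₁ α₂ lam : ℝ → ℝ),
      IsOpen I ∧ I.Nonempty ∧ I.OrdConnected ∧
      ContDiff ℝ (⊤ : ℕ∞) α₁ ∧ ContDiff ℝ (⊤ : ℕ∞) α₂ ∧ ContDiff ℝ (⊤ : ℕ∞) lam ∧
      (∀ s ∈ I, (deriv α₁ s) ^ 2 + (deriv α₂ s) ^ 2 = 1) ∧
      (∀ s ∈ I, Real.sin (α₁ s) * Real.cos (α₁ s) ≠ 0) ∧
      (∀ s ∈ I, deriv (deriv α₂) s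
        + deriv (deriv α₁) s * (Real.tan (α₁ s) - Real.cot (α₁ s))
        + 2 * (deriv α₁ s) ^ 2 = lam s) ∧
      (∀ s ∈ I, (deriv (deriv α₁) s - deriv α₁ s * deriv α₂ s) * Real.tan (α₁ s)
        - 2 * (deriv α₂ s) ^ 2 = lam s) ∧
      (∀ s ∈ I, (deriv α₁ s * deriv α₂ s - deriv (deriv α₁) s) * Real.cot (α₁ s)
        - 2 * (deriv α₂ s) ^ 2 = lam s) := by
  rintro ⟨I, a, b, lam, hI, ⟨s₀, hs₀⟩, -, ha, hb, -, hunit, hne, h1, h2, h3⟩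
  have ha' : ContDiff ℝ (⊤ : ℕ∞) (deriv a) := (contDiff_infty_iff_deriv.1 ha).2
  have hb' : ContDiff ℝ (⊤ : ℕ∞) (deriv b) := (contDiff_infty_iff_deriv.1 hb).2
  have hda (s : ℝ) : HasDerivAt a (deriv a s) s :=
    (ha.differentiable (by simp) s).hasDerivAt
  have hdu (s : ℝ) : HasDerivAt (deriv a) (deriv (deriv a) s) s :=
    (ha'.differentiable (by simp) s).hasDerivAt
  have hdv (s : ℝ) : HasDerivAt (deriv b) (deriv (deriv b) s) s :=
    (hb'.differentiable (by simp) s).hasDerivAt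
  have hu : ∀ s ∈ I, deriv (deriv a) s = deriv a s * deriv b s := by
    intro s hs
    have hS := left_ne_zero_of_mul (hne s hs)
    have hC := right_ne_zero_of_mul (hne s hs)
    have e := (h2 s hs).trans (h3 s hs).symm
    rw [Real.tan_eq_sin_div_cos, Real.cot_eq_cos_div_sin] at e
    field_simp at e
    have := Real.sin_sq_add_cos_sq (a s)
    linear_combination e - (deriv (deriv a) s - deriv a s * deriv b s) * this
  have hrel : ∀ s ∈ I, deriv (deriv b) s * (Real.sin (a s) * Real.cos (a s))
      + deriv a s * deriv b s * (Real.sin (a s) ^ 2 - Real.cos (a s) ^ 2)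
      + 2 * (Real.sin (a s) * Real.cos (a s)) = 0 := by
    intro s hs
    have hS := left_ne_zero_of_mul (hne s hs)
    have hC := right_ne_zero_of_mul (hne s hs)
    have e := (h1 s hs).trans (h2 s hs).symm
    rw [hu s hs, Real.tan_eq_sin_div_cos, Real.cot_eq_cos_div_sin] at e
    field_simp at e
    have := hunit s hs
    linear_combination e - 2 * (Real.sin (a s) * Real.cos (a s)) * this
  have hvv : ∀ s ∈ I, deriv b s * (deriv a s ^ 2 + deriv (deriv b) s) = 0 := by
    intro s hs
    have hev : (fun t => deriv a t ^ 2 + deriv b t ^ 2) =ᶠ[nhds s] fun _ => (1 : ℝ) := by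
      filter_upwards [hI.mem_nhds hs] with t ht using hunit t ht
    have hd := (((hdu s).pow 2).add ((hdv s).pow 2)).unique
      ((hasDerivAt_const s (1 : ℝ)).congr_of_eventuallyEq hev)
    rw [hu s hs] at hd
    norm_num at hd
    linear_combination hd / 2
  obtain ⟨p, hp, hvp⟩ : ∃ p ∈ I, deriv b p ≠ 0 := by
    by_contra! h0
    have hev : deriv b =ᶠ[nhds s₀] fun _ => (0 : ℝ) := by
      filter_upwards [hI.mem_nhds hs₀] with t ht using h0 t ht
    have hd := (hdv s₀).unique ((hasDerivAt_const s₀ (0 : ℝ)).congr_of_eventuallyEq hev)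
    have hr := hrel s₀ hs₀
    rw [hd, h0 s₀ hs₀] at hr
    apply hne s₀ hs₀
    linear_combination hr / 2
  have hv' : ∀ s ∈ I, deriv b s ≠ 0 → deriv (deriv b) s = -deriv a s ^ 2 := by
    intro s hs hv
    have := (mul_eq_zero.1 (hvv s hs)).resolve_left hv
    linear_combination this
  have hH : ∀ s ∈ I, deriv b s ≠ 0 →
      deriv a s * deriv b s * (Real.sin (a s) ^ 2 - Real.cos (a s) ^ 2)
      + (1 + deriv b s ^ 2) * (Real.sin (a s) * Real.cos (a s)) = 0 := by
    intro s hs hv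
    have hr := hrel s hs
    rw [hv' s hs hv] at hr
    linear_combination hr + Real.sin (a s) * Real.cos (a s) * hunit s hs
  have hev : (fun t => deriv a t * deriv b t * (Real.sin (a t) ^ 2 - Real.cos (a t) ^ 2)
      + (1 + deriv b t ^ 2) * (Real.sin (a t) * Real.cos (a t))) =ᶠ[nhds p]
      fun _ => (0 : ℝ) := by
    filter_upwards [hI.mem_nhds hp, (hdv p).continuousAt.eventually_ne hvp] with t ht hvt
      using hH t ht hvt
  have hsin := (hda p).sin
  have hcos := (hda p).cos
  have hd := ((((hdu p).mul (hdv p)).mul ((hsin.pow 2).sub (hcos.pow 2))).add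
    ((((hdv p).pow 2).const_add 1).mul (hsin.mul hcos))).unique
      ((hasDerivAt_const p (0 : ℝ)).congr_of_eventuallyEq hev)
  have hHp := hH p hp hvp
  have hUp := hunit p hp
  have hnep := hne p hp
  simp only [Pi.mul_apply, Pi.sub_apply, Pi.pow_apply, hu p hp, hv' p hp hvp] at hd
  norm_num at hd
  generalize Real.sin (a p) = S at *
  generalize Real.cos (a p) = C at *
  generalize deriv a p = u at *
  generalize deriv b p = v at *
  have key : ((1 + u ^ 2) * (1 + v ^ 2) + 2 * u ^ 2 * v ^ 2) * (S * C) = 0 := by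
    linear_combination v * hd + (1 + u ^ 2) * hHp
  have hpos : (1 + u ^ 2) * (1 + v ^ 2) + 2 * u ^ 2 * v ^ 2 ≠ 0 := by positivity
  exact (mul_ne_zero hpos hnep) key
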